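/- arXiv:2001.08825 — 2 statements merged into one kernel-verified Lean document; each statement's English description precedes it below -/
import Mathlib

section
/- Let α ∈ (0,2), n ∈ ℕ (n ≥ 0), and x ∈ ℝ. Define SH_{2n+1}(x) = Im λ_{n+1}(x) (the sine-like Higgins function). Then y ↦ (SH_{2n+1}'(x−y) − SH_{2n+1}'(x+y))·y^(−α) is absolutely integrable on (0,∞), and (c_α/α)·∫₀^∞ (SH_{2n+1}'(x−y) − SH_{2n+1}'(x+y))·y^(−α) dy = (2(n+1)·Γ(1+α)/(1+x²)^((n+1+α)/2))·cos((n+1+α)·arccot(x) − πα/2)·∑_{l≥0, 2l≤n} (−1)^l·C(n,2l)·x^(n−2l)·G_α(2l) + (2(n+1)·Γ(1+α)/(1+x²)^((n+1+α)/2))·sin((n+1+α)·arccot(x) − πα/2)·∑_{l≥0, 2l+1≤n} (−1)^l·C(n,2l+1)·x^(n−1−2l)·G_α(2l+1). -/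
open MeasureTheory Finset

/-- The constant `c_α = α·2^(α−1)·Γ(1/2+α/2)/(√π·Γ(1−α/2))`. -/
noncomputable def cFrac (α : ℝ) : ℝ :=
  α * 2 ^ (α - 1) * Real.Gamma (1 / 2 + α / 2) / (Real.sqrt Real.pi * Real.Gamma (1 - α / 2))

/-- The complex Higgins function `λ_n(x) = ((ix−1)/(ix+1))^n`. -/
noncomputable def higgins (n : ℤ) (x : ℝ) : ℂ :=
  ((Complex.I * (x : ℂ) - 1) / (Complex.I * (x : ℂ) + 1)) ^ n

/-- The derivative `λ_n'`. -/
noncomputable def higgins' (n : ℤ) (x : ℝ) : ℂ := deriv (higgins n) x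

/-- The complex Christov function `μ_n(x) = (ix−1)^n/(ix+1)^(n+1)`. -/
noncomputable def christov (n : ℤ) (x : ℝ) : ℂ :=
  (Complex.I * (x : ℂ) - 1) ^ n / (Complex.I * (x : ℂ) + 1) ^ (n + 1)

/-- The derivative `μ_n'`. -/
noncomputable def christov' (n : ℤ) (x : ℝ) : ℂ := deriv (christov n) x

/-- Generalized binomial coefficient `C(z,k) = z(z−1)⋯(z−k+1)/k!` over `ℂ`. -/
noncomputable def gbinom (z : ℂ) (k : ℕ) : ℂ :=
  (∏ i ∈ Finset.range k, (z - (i : ℂ))) / (k.factorial : ℂ)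

/-- Generalized binomial coefficient `C(z,k) = z(z−1)⋯(z−k+1)/k!` over `ℝ`. -/
noncomputable def gbinomR (z : ℝ) (k : ℕ) : ℝ :=
  (∏ i ∈ Finset.range k, (z - (i : ℝ))) / (k.factorial : ℝ)

/-- Rising factorial (Pochhammer symbol) `(z)_k = z(z+1)⋯(z+k−1)` over `ℂ`. -/
noncomputable def poch (z : ℂ) (k : ℕ) : ℂ := ∏ i ∈ Finset.range k, (z + (i : ℂ))

/-- `G_α(l) = (1/(l+1))·∑_{k=0}^{l} C(l+1,k+1)·C(−1−α,k)·2^k = ₂F₁(−l, 1+α; 2; 2)`, over `ℂ`. -/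
noncomputable def Gc (α : ℝ) (l : ℕ) : ℂ :=
  (1 / ((l : ℂ) + 1)) * ∑ k ∈ Finset.range (l + 1),
    gbinom ((l : ℂ) + 1) (k + 1) * gbinom (-1 - (α : ℂ)) k * 2 ^ k

/-- `G_α(l) = (1/(l+1))·∑_{k=0}^{l} C(l+1,k+1)·C(−1−α,k)·2^k = ₂F₁(−l, 1+α; 2; 2)`, over `ℝ`. -/
noncomputable def GR (α : ℝ) (l : ℕ) : ℝ :=
  (1 / ((l : ℝ) + 1)) * ∑ k ∈ Finset.range (l + 1),
    gbinomR ((l : ℝ) + 1) (k + 1) * gbinomR (-1 - α) k * 2 ^ k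

/-- `H_α(l) = ∑_{k=0}^{l} C(l,k)·C(−1−α,k)·2^k = ₂F₁(−l, 1+α; 1; 2)`, over `ℂ`. -/
noncomputable def Hc (α : ℝ) (l : ℕ) : ℂ :=
  ∑ k ∈ Finset.range (l + 1), gbinom (l : ℂ) k * gbinom (-1 - (α : ℂ)) k * 2 ^ k

/-- `H_α(l) = ∑_{k=0}^{l} C(l,k)·C(−1−α,k)·2^k = ₂F₁(−l, 1+α; 1; 2)`, over `ℝ`. -/
noncomputable def HR (α : ℝ) (l : ℕ) : ℝ :=
  ∑ k ∈ Finset.range (l + 1), gbinomR (l : ℝ) k * gbinomR (-1 - α) k * 2 ^ k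

/-- `arccot(x) = π/2 − arctan(x) ∈ (0,π)`. -/
noncomputable def arccot (x : ℝ) : ℝ := Real.pi / 2 - Real.arctan x

/-- The sine-like Higgins function `SH_{2n+1}(x) = Im λ_{n+1}(x)`. -/
noncomputable def SH (n : ℕ) (x : ℝ) : ℝ := (higgins ((n : ℤ) + 1) x).im

/-- The derivative `SH_{2n+1}'`. -/
noncomputable def SH' (n : ℕ) (x : ℝ) : ℝ := deriv (SH n) x

/-! The derivative of `λ_{n+1}` is a combination of the powers `(1 + ix)^(-k-2)`, `k ≤ n`, so its
fractional Laplacian is a combination of the Mellin transforms `M_m(a)` of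
`(a - iy)^(-m) - (a + iy)^(-m)`, taken at `s = 1 - α` and `a = 1 + ix`. Scaling `y` shows that
`M_m` is homogeneous of degree `s - m` in `a`, while `∂M_m/∂a = -m M_{m+1}`. Euler's relation for
homogeneous functions therefore gives both `M_m(a) = M_m(1) a^(s-m)` on the right half-plane and a
recursion in `m` that generates the coefficients `C(-1-α,k)/(k+1)`; only the Beta integral `M_2(1)`
is left to evaluate. Expanding powers of `1 + ix` in powers of `ix` turns these coefficients into
`G_α`, and the cosine and sine come from the polar form of `(1 + ix)^(-(n+1+α))`. -/

section Binomial

lemma gbinom_succ (z : ℂ) (k : ℕ) : gbinom z (k + 1) = gbinom z k * (z - k) / (k + 1) := by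
  have := k.cast_add_one_ne_zero (R := ℂ)
  simp only [gbinom, prod_range_succ, Nat.factorial_succ]
  push_cast
  field_simp

lemma gbinom_natCast (n k : ℕ) : gbinom n k = n.choose k := by
  rw [gbinom, ← descPochhammer_eval_eq_prod_range, Nat.cast_choose_eq_descPochhammer_div]

lemma ofReal_gbinomR (z : ℝ) (k : ℕ) : (gbinomR z k : ℂ) = gbinom z k := by
  simp [gbinomR, gbinom]

lemma gbinomR_natCast (n k : ℕ) : gbinomR n k = n.choose k := by
  exact_mod_cast (ofReal_gbinomR n k).trans (gbinom_natCast n k)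

lemma ofReal_GR (α : ℝ) (l : ℕ) : (GR α l : ℂ) = Gc α l := by
  simp [GR, Gc, ofReal_gbinomR]

lemma Gc_eq_sum_choose (α : ℝ) (l : ℕ) :
    Gc α l = ∑ k ∈ range (l + 1), (l.choose k : ℂ) * (gbinom (-1 - α) k * 2 ^ k / (k + 1)) := by
  rw [Gc, mul_sum]
  refine sum_congr rfl fun k _ => ?_
  have hl := l.cast_add_one_ne_zero (R := ℂ)
  have hk := k.cast_add_one_ne_zero (R := ℂ)
  have hchoose : ((l : ℂ) + 1) * l.choose k = (l + 1).choose (k + 1) * (k + 1) := by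
    exact_mod_cast Nat.add_one_mul_choose_eq l k
  rw [← Nat.cast_succ, gbinom_natCast, Nat.succ_eq_add_one]
  push_cast
  field_simp
  linear_combination (-(gbinom (-1 - α) k)) * hchoose

lemma sum_choose_mul_one_add_pow {R : Type*} [CommSemiring R] (c : ℕ → R) (z : R) (n : ℕ) :
    ∑ k ∈ range (n + 1), n.choose k * c k * (1 + z) ^ (n - k) =
      ∑ j ∈ range (n + 1), n.choose j * z ^ (n - j) * ∑ k ∈ range (j + 1), j.choose k * c k := by
  have hswap : ∀ F : ℕ → ℕ → R, ∑ j ∈ range (n + 1), ∑ k ∈ range (j + 1), F j k =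
      ∑ k ∈ range (n + 1), ∑ i ∈ range (n - k + 1), F (k + i) k := by
    intro F
    rw [sum_comm' (t' := range (n + 1)) (s' := fun k => Ico k (n + 1)) (by grind)]
    refine sum_congr rfl fun k hk => ?_
    rw [sum_Ico_eq_sum_range, Nat.sub_add_comm (by grind)]
  simp only [mul_sum]
  rw [hswap]
  refine sum_congr rfl fun k _ => ?_
  rw [add_pow, mul_sum]
  refine sum_congr rfl fun i _ => ?_
  have hchoose : ((n.choose (k + i) : R)) * (k + i).choose k = n.choose k * (n - k).choose i := by
    have := Nat.choose_mul (n := n) (k.le_add_right i)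
    rw [Nat.add_sub_cancel_left] at this
    rw [← Nat.cast_mul, this, Nat.cast_mul]
  rw [one_pow, one_mul, Nat.sub_sub]
  calc n.choose k * c k * (z ^ (n - (k + i)) * (n - k).choose i)
      = n.choose k * (n - k).choose i * (z ^ (n - (k + i)) * c k) := by ring
    _ = n.choose (k + i) * z ^ (n - (k + i)) * ((k + i).choose k * c k) := by rw [← hchoose]; ring

lemma sum_range_even_add_odd {M : Type*} [AddCommMonoid M] (n : ℕ) (f : ℕ → M) :
    ∑ j ∈ range (n + 1), f j =
      ∑ l ∈ (range (n + 1)).filter (fun l => 2 * l ≤ n), f (2 * l) +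
        ∑ l ∈ (range (n + 1)).filter (fun l => 2 * l + 1 ≤ n), f (2 * l + 1) := by
  rw [← sum_filter_add_sum_filter_not (range (n + 1)) Even]
  congr 1
  · exact sum_nbij' (fun j => j / 2) (fun l => 2 * l) (by grind) (by grind) (by grind) (by grind)
      (by grind)
  · exact sum_nbij' (fun j => j / 2) (fun l => 2 * l + 1) (by grind) (by grind) (by grind)
      (by grind) (by grind)

end Binomial

section BetaIntegral

open Complex

lemma image_div_one_add_Ioi : (fun t : ℝ => t / (1 + t)) '' Set.Ioi 0 = Set.Ioo 0 1 := by
  refine Set.Subset.antisymm ?_ fun x hx => ⟨x / (1 - x), ?_, ?_⟩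
  · rintro _ ⟨t, ht : 0 < t, rfl⟩
    exact ⟨by positivity, (div_lt_one (by positivity)).2 (by linarith)⟩
  · exact div_pos hx.1 (sub_pos.2 hx.2)
  · have : 1 - x ≠ 0 := (sub_pos.2 hx.2).ne'
    field_simp
    ring

lemma hasDerivAt_div_one_add {t : ℝ} (ht : 0 < t) :
    HasDerivAt (fun t : ℝ => t / (1 + t)) ((1 + t) ^ 2)⁻¹ t := by
  have h := (hasDerivAt_id t).div ((hasDerivAt_id t).const_add 1) (by simp only [id]; positivity)
  exact h.congr_deriv (by simp only [id]; field_simp; ring)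

lemma betaIntegrand_div_one_add (p q : ℂ) {t : ℝ} (ht : 0 < t) :
    |((1 + t) ^ 2)⁻¹| • (((t / (1 + t) : ℝ) : ℂ) ^ (p - 1) *
        (1 - ((t / (1 + t) : ℝ) : ℂ)) ^ (q - 1)) =
      (t : ℂ) ^ (p - 1) • ((1 + t : ℝ) : ℂ) ^ (-(p + q)) := by
  have ht1 : 0 < 1 + t := by positivity
  have hc : ((1 + t : ℝ) : ℂ) ≠ 0 := ofReal_ne_zero.2 ht1.ne'
  have hsub : 1 - ((t / (1 + t) : ℝ) : ℂ) = ((1 + t)⁻¹ : ℝ) := by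
    rw [← ofReal_one, ← ofReal_sub]
    congr 1
    field_simp
    ring
  have hexp : -(p + q) = -((2 : ℕ) : ℂ) + -(p - 1) + -(q - 1) := by push_cast; ring
  rw [hsub, div_eq_mul_inv, ofReal_mul, mul_cpow_ofReal_nonneg ht.le (by positivity),
    abs_of_pos (by positivity), real_smul, smul_eq_mul, hexp, cpow_add _ _ hc, cpow_add _ _ hc,
    cpow_neg _ ((2 : ℕ) : ℂ), cpow_natCast, cpow_neg, cpow_neg, ofReal_inv, ofReal_inv, ofReal_pow,
    inv_cpow _ _ (by rw [arg_ofReal_of_nonneg ht1.le]; exact Real.pi_pos.ne),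
    inv_cpow _ _ (by rw [arg_ofReal_of_nonneg ht1.le]; exact Real.pi_pos.ne)]
  ring

/- The substitution `x = t / (1 + t)` carries `∫₀^∞ t^(p-1) (1+t)^(-(p+q)) dt` to Euler's Beta
integral over `(0, 1)`. -/
theorem hasMellin_one_add_cpow_neg {p q : ℂ} (hp : 0 < p.re) (hq : 0 < q.re) :
    HasMellin (fun t : ℝ => ((1 + t : ℝ) : ℂ) ^ (-(p + q))) p (betaIntegral p q) := by
  set φ : ℝ → ℝ := fun t => t / (1 + t)
  set g : ℝ → ℂ := fun x => (x : ℂ) ^ (p - 1) * (1 - (x : ℂ)) ^ (q - 1)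
  have hderiv : ∀ t ∈ Set.Ioi (0 : ℝ), HasDerivWithinAt φ ((1 + t) ^ 2)⁻¹ (Set.Ioi 0) t :=
    fun t ht => (hasDerivAt_div_one_add ht).hasDerivWithinAt
  have hinj : Set.InjOn φ (Set.Ioi 0) := by
    intro s (hs : 0 < s) t (ht : 0 < t) hst
    have := (div_eq_div_iff (by positivity) (by positivity)).1 hst
    linarith
  have hcongr : Set.EqOn (fun t : ℝ => |((1 + t) ^ 2)⁻¹| • g (φ t))
      (fun t : ℝ => (t : ℂ) ^ (p - 1) • ((1 + t : ℝ) : ℂ) ^ (-(p + q))) (Set.Ioi 0) :=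
    fun t ht => betaIntegrand_div_one_add p q ht
  constructor
  · have hg : IntegrableOn g (Set.Ioo 0 1) :=
      (intervalIntegrable_iff_integrableOn_Ioo_of_le zero_le_one).1 (betaIntegral_convergent hp hq)
    rw [← image_div_one_add_Ioi,
      integrableOn_image_iff_integrableOn_abs_deriv_smul measurableSet_Ioi hderiv hinj] at hg
    exact hg.congr_fun hcongr measurableSet_Ioi
  · rw [betaIntegral, intervalIntegral.integral_of_le zero_le_one, integral_Ioc_eq_integral_Ioo,
      ← image_div_one_add_Ioi,
      integral_image_eq_integral_abs_deriv_smul measurableSet_Ioi hderiv hinj]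
    exact (setIntegral_congr_fun measurableSet_Ioi hcongr).symm

lemma mellin_one_add_sq_cpow_neg {p q : ℂ} (hp : 0 < p.re) (hq : 0 < q.re) :
    mellin (fun y : ℝ => ((1 + y ^ 2 : ℝ) : ℂ) ^ (-(p + q))) (2 * p) = betaIntegral p q / 2 := by
  have h := mellin_comp_rpow (fun t : ℝ => ((1 + t : ℝ) : ℂ) ^ (-(p + q))) (2 * p) 2
  simp only [Real.rpow_two] at h
  rw [h, ofReal_ofNat, mul_div_cancel_left₀ p two_ne_zero, (hasMellin_one_add_cpow_neg hp hq).2,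
    abs_two, real_smul, ofReal_inv, ofReal_ofNat, inv_mul_eq_div]

end BetaIntegral

lemma norm_pow_sub_pow_le {R : Type*} [SeminormedCommRing R] [NormOneClass R] {u v : R} {c : ℝ}
    (hu : ‖u‖ ≤ c) (hv : ‖v‖ ≤ c) (m : ℕ) :
    ‖u ^ m - v ^ m‖ ≤ m * c ^ (m - 1) * ‖u - v‖ := by
  have hc : 0 ≤ c := (norm_nonneg u).trans hu
  have hterm : ∀ i ∈ range m, ‖u ^ i * v ^ (m - 1 - i)‖ ≤ c ^ (m - 1) := by
    intro i hi
    calc ‖u ^ i * v ^ (m - 1 - i)‖ ≤ ‖u‖ ^ i * ‖v‖ ^ (m - 1 - i) :=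
          (norm_mul_le _ _).trans (by gcongr <;> exact norm_pow_le _ _)
      _ ≤ c ^ i * c ^ (m - 1 - i) := by gcongr
      _ = c ^ (m - 1) := by rw [← pow_add, Nat.add_sub_cancel' (by grind)]
  rw [← (Commute.all u v).geom_sum₂_mul]
  refine (norm_mul_le _ _).trans ?_
  gcongr
  simpa using norm_sum_le_of_le _ hterm

section InvPowDiff

open Complex

/-- The odd part `(a - iy)⁻ᵐ - (a + iy)⁻ᵐ` of an inverse power along the vertical line through `a`.
Derivatives of Higgins functions are combinations of inverse powers of `1 + ix`, so their
fractional Laplacians are combinations of Mellin transforms of these functions. -/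
noncomputable def invPowDiff (m : ℕ) (a : ℂ) (y : ℝ) : ℂ :=
  (a - I * y)⁻¹ ^ m - (a + I * y)⁻¹ ^ m

variable {a s : ℂ} {m : ℕ}

lemma add_I_mul_ne_zero (ha : 0 < a.re) (y : ℝ) : a + I * y ≠ 0 := by
  intro h
  have hre : a.re = 0 := by simpa using congrArg re h
  exact ha.ne' hre

lemma sub_I_mul_ne_zero (ha : 0 < a.re) (y : ℝ) : a - I * y ≠ 0 := by
  simpa [sub_eq_add_neg] using add_I_mul_ne_zero ha (-y)

lemma norm_inv_add_I_mul_le {δ R : ℝ} (hδ : 0 < δ) (hre : δ ≤ a.re) (hR : ‖a‖ ≤ R) (y : ℝ) :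
    ‖(a + I * y)⁻¹‖ ≤ (1 + R + δ) / δ / (1 + |y|) := by
  have hpos : 0 < ‖a + I * y‖ := norm_pos_iff.2 (add_I_mul_ne_zero (hδ.trans_le hre) y)
  have hR0 : 0 ≤ R := (norm_nonneg a).trans hR
  have hδle : δ ≤ ‖a + I * y‖ := hre.trans (by simpa using re_le_norm (a + I * y))
  have hyle : |y| ≤ ‖a + I * y‖ + R := by
    have h : ‖(a + I * y) - a‖ ≤ ‖a + I * y‖ + ‖a‖ := norm_sub_le _ _
    simp only [add_sub_cancel_left, norm_mul, norm_I, one_mul, norm_real, Real.norm_eq_abs] at h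
    linarith
  rw [norm_inv, inv_eq_one_div, div_le_div_iff₀ hpos (by positivity), div_mul_eq_mul_div,
    le_div_iff₀ hδ]
  nlinarith [mul_le_mul_of_nonneg_left hδle hR0]

lemma norm_inv_sub_I_mul_le {δ R : ℝ} (hδ : 0 < δ) (hre : δ ≤ a.re) (hR : ‖a‖ ≤ R) (y : ℝ) :
    ‖(a - I * y)⁻¹‖ ≤ (1 + R + δ) / δ / (1 + |y|) := by
  simpa [sub_eq_add_neg] using norm_inv_add_I_mul_le hδ hre hR (-y)

lemma norm_invPowDiff_le {δ R : ℝ} (hδ : 0 < δ) (hre : δ ≤ a.re) (hR : ‖a‖ ≤ R) (m : ℕ) {y : ℝ}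
    (hy : 0 < y) :
    ‖invPowDiff m a y‖ ≤ 2 * m * ((1 + R + δ) / δ) ^ (m + 1) * (y / (1 + y) ^ (m + 1)) := by
  have hu := norm_inv_sub_I_mul_le hδ hre hR y
  have hv := norm_inv_add_I_mul_le hδ hre hR y
  rw [abs_of_pos hy] at hu hv
  generalize (1 + R + δ) / δ = C at hu hv ⊢
  set u := (a - I * y)⁻¹
  set v := (a + I * y)⁻¹
  have huv : ‖u - v‖ ≤ 2 * y * (C / (1 + y)) ^ 2 := by
    have h : u - v = 2 * I * y * (u * v) := by
      have := add_I_mul_ne_zero (hδ.trans_le hre) y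
      have := sub_I_mul_ne_zero (hδ.trans_le hre) y
      simp only [u, v]
      field_simp
      ring
    have hnorm : ‖2 * I * (y : ℂ)‖ = 2 * y := by simp [abs_of_pos hy]
    rw [h, norm_mul, hnorm, norm_mul, pow_two]
    gcongr
    exact (norm_nonneg u).trans hu
  have hc : 0 ≤ C / (1 + y) := (norm_nonneg u).trans hu
  refine (norm_pow_sub_pow_le hu hv m).trans ?_
  calc m * (C / (1 + y)) ^ (m - 1) * ‖u - v‖
      ≤ m * (C / (1 + y)) ^ (m - 1) * (2 * y * (C / (1 + y)) ^ 2) := by gcongr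
    _ = 2 * m * C ^ (m + 1) * (y / (1 + y) ^ (m + 1)) := by
      rcases m with _ | m
      · simp
      · have : 1 + y ≠ 0 := by positivity
        rw [Nat.add_sub_cancel, div_pow, div_pow]
        field_simp
        ring

lemma integrableOn_rpow_mul_div_one_add_pow {σ : ℝ} (h₁ : -1 < σ) (h₂ : σ < m) :
    IntegrableOn (fun y : ℝ => y ^ (σ - 1) * (y / (1 + y) ^ (m + 1))) (Set.Ioi 0) := by
  have h : IntegrableOn _ (Set.Ioi (0 : ℝ)) :=
    (hasMellin_one_add_cpow_neg (p := ((σ + 1 : ℝ) : ℂ)) (q := ((m - σ : ℝ) : ℂ))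
      (by simp only [ofReal_re]; linarith) (by simp only [ofReal_re]; linarith)).1.norm
  refine IntegrableOn.congr_fun h (fun y (hy : 0 < y) => ?_) measurableSet_Ioi
  have hexp : -(((σ + 1 : ℝ) : ℂ) + ((m - σ : ℝ) : ℂ)) = -((m + 1 : ℕ) : ℂ) := by push_cast; ring
  simp only [hexp, norm_smul, norm_cpow_eq_rpow_re_of_pos hy, cpow_neg, cpow_natCast, norm_inv,
    norm_pow, norm_real, sub_re, ofReal_re, one_re, Real.norm_eq_abs]
  rw [abs_of_pos (by positivity), add_sub_right_comm, Real.rpow_add hy, Real.rpow_one]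
  ring

lemma measurable_invPowDiff (m : ℕ) (a : ℂ) : Measurable (invPowDiff m a) := by
  unfold invPowDiff
  fun_prop

lemma measurable_cpow_smul_invPowDiff (m : ℕ) (a s : ℂ) :
    Measurable fun y : ℝ => (y : ℂ) ^ (s - 1) • invPowDiff m a y := by
  have := measurable_invPowDiff m a
  fun_prop

lemma norm_cpow_smul_invPowDiff_le {δ R : ℝ} (hδ : 0 < δ) (hre : δ ≤ a.re) (hR : ‖a‖ ≤ R) (m : ℕ)
    (s : ℂ) {y : ℝ} (hy : 0 < y) :
    ‖(y : ℂ) ^ (s - 1) • invPowDiff m a y‖ ≤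
      2 * m * ((1 + R + δ) / δ) ^ (m + 1) * (y ^ (s.re - 1) * (y / (1 + y) ^ (m + 1))) := by
  rw [norm_smul, norm_cpow_eq_rpow_re_of_pos hy, sub_re, one_re, mul_left_comm]
  gcongr
  exact norm_invPowDiff_le hδ hre hR m hy

lemma mellinConvergent_invPowDiff (ha : 0 < a.re) (h₁ : -1 < s.re) (h₂ : s.re < m) :
    MellinConvergent (invPowDiff m a) s :=
  Integrable.mono' ((integrableOn_rpow_mul_div_one_add_pow h₁ h₂).const_mul _)
    (measurable_cpow_smul_invPowDiff m a s).aestronglyMeasurable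
    ((ae_restrict_iff' measurableSet_Ioi).2 <| .of_forall fun _ hy =>
      norm_cpow_smul_invPowDiff_le ha le_rfl le_rfl m s hy)

lemma hasDerivAt_invPowDiff (m : ℕ) (ha : 0 < a.re) (y : ℝ) :
    HasDerivAt (fun b => invPowDiff m b y) (-m * invPowDiff (m + 1) a y) a := by
  have hsub := (((hasDerivAt_id a).sub_const (I * y)).inv (sub_I_mul_ne_zero ha y)).pow m
  have hadd := (((hasDerivAt_id a).add_const (I * y)).inv (add_I_mul_ne_zero ha y)).pow m
  refine (hsub.sub hadd).congr_deriv ?_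
  rcases m with _ | m
  · simp
  · simp only [invPowDiff, Nat.add_sub_cancel, id, Pi.inv_apply, div_eq_mul_inv, ← inv_pow]
    ring

lemma hasDerivAt_mellin_invPowDiff (ha : 0 < a.re) (h₁ : -1 < s.re) (h₂ : s.re < m) :
    HasDerivAt (fun b => mellin (invPowDiff m b) s) (-m * mellin (invPowDiff (m + 1) a) s) a := by
  set δ := a.re / 2
  set R := ‖a‖ + 1
  have hδ : 0 < δ := half_pos ha
  have hnhds : {b : ℂ | δ < b.re} ∩ Metric.ball 0 R ∈ nhds a :=
    ((isOpen_lt continuous_const continuous_re).inter Metric.isOpen_ball).mem_nhds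
      ⟨half_lt_self ha, by simp [R]⟩
  have hbound := integrableOn_rpow_mul_div_one_add_pow (m := m + 1) h₁ (by push_cast; linarith)
  have h := (hasDerivAt_integral_of_dominated_loc_of_deriv_le
    (μ := volume.restrict (Set.Ioi (0 : ℝ)))
    (F := fun b y => (y : ℂ) ^ (s - 1) • invPowDiff m b y)
    (F' := fun b y => -(m : ℂ) * ((y : ℂ) ^ (s - 1) • invPowDiff (m + 1) b y))
    hnhds (.of_forall fun b => (measurable_cpow_smul_invPowDiff m b s).aestronglyMeasurable)
    (mellinConvergent_invPowDiff ha h₁ h₂)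
    ((measurable_cpow_smul_invPowDiff (m + 1) a s).const_mul _).aestronglyMeasurable
    ((ae_restrict_iff' measurableSet_Ioi).2 <| .of_forall fun y hy b hb => by
      rw [norm_mul]
      exact mul_le_mul_of_nonneg_left (norm_cpow_smul_invPowDiff_le hδ hb.1.le
        (mem_ball_zero_iff.1 hb.2).le (m + 1) s hy) (norm_nonneg _))
    ((hbound.const_mul _).const_mul _)
    ((ae_restrict_iff' measurableSet_Ioi).2 <| .of_forall fun y _ b hb => by
      simpa only [smul_eq_mul, mul_left_comm] using
        (hasDerivAt_invPowDiff m (hδ.trans hb.1) y).const_mul ((y : ℂ) ^ (s - 1)))).2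
  rwa [integral_const_mul] at h

lemma mellin_invPowDiff_ofReal_mul (m : ℕ) (a s : ℂ) {t : ℝ} (ht : 0 < t) :
    mellin (invPowDiff m (t * a)) s = (t : ℂ) ^ (s - m) * mellin (invPowDiff m a) s := by
  have htc : (t : ℂ) ≠ 0 := ofReal_ne_zero.2 ht.ne'
  have hscale : (fun y => invPowDiff m (t * a) (t * y)) =
      fun y => ((t : ℂ) ^ m)⁻¹ • invPowDiff m a y := by
    funext y
    have hsub : t * a - I * (t * y : ℝ) = t * (a - I * y) := by push_cast; ring
    have hadd : t * a + I * (t * y : ℝ) = t * (a + I * y) := by push_cast; ring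
    rw [invPowDiff, invPowDiff, hsub, hadd, mul_inv, mul_inv, mul_pow, mul_pow, inv_pow (t : ℂ),
      ← mul_sub, smul_eq_mul]
  have h := mellin_comp_mul_left (invPowDiff m (t * a)) s ht
  rw [hscale, mellin_const_smul, smul_eq_mul, smul_eq_mul, cpow_neg,
    eq_inv_mul_iff_mul_eq₀ (by simp [cpow_eq_zero_iff, htc])] at h
  rw [← h, cpow_sub _ _ htc, cpow_natCast]
  ring

/- Euler's relation for the homogeneous function of `a` in the previous lemma, whose `a`-derivative
raises the exponent `m`. -/
lemma mul_mellin_invPowDiff_succ (ha : 0 < a.re) (h₁ : -1 < s.re) (h₂ : s.re < m) :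
    m * a * mellin (invPowDiff (m + 1) a) s = (m - s) * mellin (invPowDiff m a) s := by
  have hleft : HasDerivAt (fun t : ℝ => mellin (invPowDiff m (t * a)) s)
      (-m * mellin (invPowDiff (m + 1) a) s * a) 1 := by
    have hline : HasDerivAt (fun t : ℝ => (t : ℂ) * a) a 1 := by
      simpa using (hasDerivAt_id (1 : ℝ)).ofReal_comp.mul_const a
    have h := hasDerivAt_mellin_invPowDiff (a := ((1 : ℝ) : ℂ) * a) (by simpa using ha) h₁ h₂
    rw [ofReal_one, one_mul] at h
    exact h.comp_of_eq 1 hline (by simp)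
  have hright : HasDerivAt (fun t : ℝ => mellin (invPowDiff m (t * a)) s)
      ((s - m) * mellin (invPowDiff m a) s) 1 := by
    have h : HasDerivAt (fun t : ℝ => (t : ℂ) ^ (s - m)) (s - m) 1 := by
      simpa using ((hasDerivAt_id (1 : ℂ)).cpow_const (c := s - m) (by simp)).comp_ofReal (z := 1)
    refine (h.mul_const _).congr_of_eventuallyEq ?_
    filter_upwards [lt_mem_nhds one_pos] with t ht using mellin_invPowDiff_ofReal_mul m a s ht
  linear_combination -(hleft.unique hright)

lemma mellin_invPowDiff_eq_mul_cpow (ha : 0 < a.re) (h₁ : -1 < s.re) (h₂ : s.re < m) :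
    mellin (invPowDiff m a) s = mellin (invPowDiff m 1) s * a ^ (s - m) := by
  set f : ℂ → ℂ := fun b => mellin (invPowDiff m b) s * b ^ (m - s)
  have hf : ∀ b : ℂ, 0 < b.re → HasDerivAt f 0 b := by
    intro b hb
    have hb0 : b ≠ 0 := by rintro rfl; simp at hb
    refine ((hasDerivAt_mellin_invPowDiff hb h₁ h₂).mul
      ((hasDerivAt_id b).cpow_const (c := m - s) (Or.inl hb))).congr_deriv ?_
    have hpow : b ^ (m - s) = b * b ^ (m - s - 1) := by
      rw [cpow_sub _ 1 hb0, cpow_one, mul_div_cancel₀ _ hb0]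
    simp only [id, hpow]
    linear_combination -(b ^ (m - s - 1)) * mul_mellin_invPowDiff_succ hb h₁ h₂
  have hconst : f a = f 1 :=
    (isOpen_lt continuous_const continuous_re).is_const_of_deriv_eq_zero
      (convex_halfSpace_re_gt 0).isPreconnected
      (fun b hb => (hf b hb).differentiableAt.differentiableWithinAt)
      (fun b hb => (hf b hb).deriv) ha (by simp)
  have ha0 : a ≠ 0 := by rintro rfl; simp at ha
  simp only [f, one_cpow, mul_one] at hconst
  rw [← hconst, mul_assoc, ← cpow_add _ _ ha0]
  simp

lemma mellin_invPowDiff_two_one (h₁ : -1 < s.re) (h₂ : s.re < 3) :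
    mellin (invPowDiff 2 1) s = 2 * I * (Gamma ((1 + s) / 2) * Gamma ((3 - s) / 2)) := by
  have hfun : invPowDiff 2 1 = fun y : ℝ => (4 * I) • ((y : ℂ) ^ (1 : ℂ) •
      ((1 + y ^ 2 : ℝ) : ℂ) ^ (-((1 + s) / 2 + (3 - s) / 2))) := by
    funext y
    have hexp : -((1 + s) / 2 + (3 - s) / 2) = -((2 : ℕ) : ℂ) := by push_cast; ring
    have hadd := add_I_mul_ne_zero (a := 1) (by simp) y
    have hsub := sub_I_mul_ne_zero (a := 1) (by simp) y
    have hfactor : ((1 + y ^ 2 : ℝ) : ℂ) = (1 - I * y) * (1 + I * y) := by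
      push_cast
      linear_combination (y : ℂ) ^ 2 * I_sq
    rw [hexp, cpow_neg, cpow_natCast, cpow_one, hfactor, invPowDiff, smul_eq_mul, smul_eq_mul]
    field_simp
    ring
  have hp : 0 < ((1 + s) / 2).re := by rw [div_ofNat_re, add_re, one_re]; linarith
  have hq : 0 < ((3 - s) / 2).re := by rw [div_ofNat_re, sub_re, re_ofNat]; linarith
  have hGamma : Gamma 2 = 1 := by simp
  have hmellin := mellin_one_add_sq_cpow_neg hp hq
  rw [mul_div_cancel₀ _ two_ne_zero] at hmellin
  rw [hfun, mellin_const_smul, mellin_cpow_smul, add_comm s 1, hmellin,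
    betaIntegral_eq_Gamma_mul_div _ _ hp hq, show (1 + s) / 2 + (3 - s) / 2 = 2 by ring,
    hGamma, smul_eq_mul]
  ring

lemma mellin_invPowDiff_add_two_one (h₁ : -1 < s.re) (h₂ : s.re < 2) (k : ℕ) :
    mellin (invPowDiff (k + 2) 1) s =
      2 * I * (Gamma ((1 + s) / 2) * Gamma ((3 - s) / 2)) *
        ((-1) ^ k * gbinom (s - 2) k / (k + 1)) := by
  induction k with
  | zero => simpa [gbinom] using mellin_invPowDiff_two_one h₁ (h₂.trans (by norm_num))
  | succ k ih =>
    have hrec := mul_mellin_invPowDiff_succ (a := 1) (m := k + 2) (s := s) (by simp) h₁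
      (by push_cast; linarith [k.cast_nonneg (α := ℝ)])
    have hk₁ : (k : ℂ) + 1 ≠ 0 := k.cast_add_one_ne_zero
    have hk₂ : (k : ℂ) + 1 + 1 ≠ 0 := by exact_mod_cast (k + 1).succ_ne_zero
    refine mul_left_cancel₀ hk₂ ?_
    rw [ih] at hrec
    rw [gbinom_succ]
    push_cast at hrec ⊢
    field_simp at hrec ⊢
    linear_combination hrec

lemma mellin_invPowDiff_add_two (ha : 0 < a.re) (h₁ : -1 < s.re) (h₂ : s.re < 2) (k : ℕ) :
    mellin (invPowDiff (k + 2) a) s =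
      2 * I * (Gamma ((1 + s) / 2) * Gamma ((3 - s) / 2)) *
        ((-1) ^ k * gbinom (s - 2) k / (k + 1)) * a ^ (s - (k + 2)) := by
  rw [mellin_invPowDiff_eq_mul_cpow ha h₁ (by push_cast; linarith [k.cast_nonneg (α := ℝ)]),
    mellin_invPowDiff_add_two_one h₁ h₂]
  push_cast
  rfl

lemma mellin_invPowDiff_add_two_one_sub (ha : 0 < a.re) {α : ℝ} (hα : α ∈ Set.Ioo (-1 : ℝ) 2)
    (k : ℕ) :
    mellin (invPowDiff (k + 2) a) ((1 - α : ℝ) : ℂ) =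
      2 * I * (Real.Gamma (1 - α / 2) * Real.Gamma (1 + α / 2) : ℝ) *
        ((-1) ^ k * gbinom (-1 - α) k / (k + 1)) * a ^ (-((k : ℂ) + 1 + α)) := by
  have hfst : (1 + ((1 - α : ℝ) : ℂ)) / 2 = (1 - α / 2 : ℝ) := by push_cast; ring
  have hsnd : (3 - ((1 - α : ℝ) : ℂ)) / 2 = (1 + α / 2 : ℝ) := by push_cast; ring
  have hbinom : ((1 - α : ℝ) : ℂ) - 2 = -1 - α := by push_cast; ring
  have hexp : ((1 - α : ℝ) : ℂ) - (k + 2) = -((k : ℂ) + 1 + α) := by push_cast; ring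
  rw [mellin_invPowDiff_add_two ha (by rw [ofReal_re]; linarith [hα.2])
    (by rw [ofReal_re]; linarith [hα.1]), hfst, hsnd, hbinom, hexp, Gamma_ofReal, Gamma_ofReal,
    ofReal_mul]

end InvPowDiff

section Higgins

open Complex

lemma higgins_natCast_succ (n : ℕ) :
    higgins ((n : ℤ) + 1) = fun x : ℝ => (1 - 2 * (1 + I * x)⁻¹) ^ (n + 1) := by
  funext x
  have := add_I_mul_ne_zero (a := 1) (by simp) x
  rw [higgins, ← Nat.cast_succ, zpow_natCast, add_comm (I * (x : ℂ))]
  congr 1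
  field_simp
  ring

lemma hasDerivAt_higgins_natCast_succ (n : ℕ) (x : ℝ) :
    HasDerivAt (higgins ((n : ℤ) + 1))
      (∑ k ∈ range (n + 1),
        2 * I * (n + 1) * (n.choose k * (-2) ^ k) * (1 + I * x)⁻¹ ^ (k + 2)) x := by
  have hline : HasDerivAt (fun x : ℝ => 1 + I * (x : ℂ)) I x := by
    simpa using ((hasDerivAt_id (x : ℂ)).const_mul I).comp_ofReal.const_add 1
  have h := (((hline.inv (add_I_mul_ne_zero (a := 1) (by simp) x)).const_mul 2).const_sub 1).pow
    (n + 1)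
  rw [higgins_natCast_succ]
  refine h.congr_deriv ?_
  simp only [Nat.add_sub_cancel, Pi.inv_apply, div_eq_mul_inv, ← inv_pow]
  rw [sub_eq_add_neg 1, add_comm 1, add_pow, mul_sum, sum_mul]
  refine sum_congr rfl fun k _ => ?_
  rw [neg_mul_eq_neg_mul, mul_pow, one_pow]
  push_cast
  ring

lemma higgins'_sub_sub_higgins'_add (n : ℕ) (x y : ℝ) :
    higgins' ((n : ℤ) + 1) (x - y) - higgins' ((n : ℤ) + 1) (x + y) =
      ∑ k ∈ range (n + 1),
        2 * I * (n + 1) * (n.choose k * (-2) ^ k) * invPowDiff (k + 2) (1 + I * x) y := by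
  have hsub : 1 + I * ((x - y : ℝ) : ℂ) = 1 + I * x - I * y := by push_cast; ring
  have hadd : 1 + I * ((x + y : ℝ) : ℂ) = 1 + I * x + I * y := by push_cast; ring
  rw [higgins', higgins', (hasDerivAt_higgins_natCast_succ n _).deriv,
    (hasDerivAt_higgins_natCast_succ n _).deriv, hsub, hadd, ← sum_sub_distrib]
  simp only [invPowDiff, mul_sub]

lemma hasMellin_sum {ι E : Type*} [NormedAddCommGroup E] [NormedSpace ℂ E] {t : Finset ι}
    {f : ι → ℝ → E} {s : ℂ} (hf : ∀ i ∈ t, MellinConvergent (f i) s) :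
    HasMellin (fun y => ∑ i ∈ t, f i y) s (∑ i ∈ t, mellin (f i) s) := by
  constructor
  · simp only [MellinConvergent, smul_sum]
    exact integrable_finsetSum t hf
  · simp only [mellin, smul_sum]
    exact integral_finsetSum t hf

theorem hasMellin_higgins'_sub_sub_higgins'_add {α : ℝ} (hα : α ∈ Set.Ioo (-1 : ℝ) 2) (n : ℕ)
    (x : ℝ) :
    HasMellin (fun y : ℝ => higgins' ((n : ℤ) + 1) (x - y) - higgins' ((n : ℤ) + 1) (x + y))
      ((1 - α : ℝ) : ℂ)
      (((-4 * (n + 1) * (Real.Gamma (1 - α / 2) * Real.Gamma (1 + α / 2)) : ℝ) : ℂ) *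
        ((1 + I * x) ^ (-((n : ℂ) + 1 + α)) *
          ∑ j ∈ range (n + 1), n.choose j * (I * x) ^ (n - j) * Gc α j)) := by
  set a := 1 + I * (x : ℂ)
  have ha : 0 < a.re := by simp [a]
  have ha0 : a ≠ 0 := by simpa [a] using add_I_mul_ne_zero (a := 1) (by simp) x
  have hconv : ∀ k : ℕ, MellinConvergent (invPowDiff (k + 2) a) ((1 - α : ℝ) : ℂ) := fun k =>
    mellinConvergent_invPowDiff ha (by rw [ofReal_re]; linarith [hα.2])
      (by rw [ofReal_re]; push_cast; linarith [hα.1, k.cast_nonneg (α := ℝ)])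
  have hmellin : ∀ k ∈ range (n + 1),
      2 * I * (n + 1) * (n.choose k * (-2) ^ k) *
          mellin (invPowDiff (k + 2) a) ((1 - α : ℝ) : ℂ) =
        ((-4 * (n + 1) * (Real.Gamma (1 - α / 2) * Real.Gamma (1 + α / 2)) : ℝ) : ℂ) *
          (a ^ (-((n : ℂ) + 1 + α)) *
            (n.choose k * (gbinom (-1 - α) k * 2 ^ k / (k + 1)) * a ^ (n - k))) := by
    intro k hk
    have hpow : a ^ (-((k : ℂ) + 1 + α)) = a ^ (-((n : ℂ) + 1 + α)) * a ^ (n - k) := by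
      rw [← cpow_natCast, ← cpow_add _ _ ha0, Nat.cast_sub (by grind)]
      ring_nf
    have htwo : (-2 : ℂ) ^ k * (-1) ^ k = 2 ^ k := by rw [← mul_pow]; norm_num
    have hI : 2 * I * (2 * I) = -4 := by linear_combination 4 * I_sq
    rw [mellin_invPowDiff_add_two_one_sub ha hα, hpow, ← htwo]
    push_cast
    rw [← hI]
    ring
  have h := hasMellin_sum (t := range (n + 1)) fun k _ =>
    (hconv k).const_smul (2 * I * (n + 1) * (n.choose k * (-2) ^ k))
  simp only [mellin_const_smul] at h
  simp only [smul_eq_mul] at h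
  simp only [higgins'_sub_sub_higgins'_add, Gc_eq_sum_choose]
  rwa [sum_congr rfl hmellin, ← mul_sum, ← mul_sum, sum_choose_mul_one_add_pow] at h

end Higgins

lemma cFrac_div_mul_Gamma_mul_Gamma {α : ℝ} (hα0 : α ≠ 0) (hα : α < 2) :
    cFrac α / α * (Real.Gamma (1 - α / 2) * Real.Gamma (1 + α / 2)) = Real.Gamma (1 + α) / 2 := by
  have hΓ : Real.Gamma (1 - α / 2) ≠ 0 := (Real.Gamma_pos_of_pos (by linarith)).ne'
  have hπ : Real.sqrt Real.pi ≠ 0 := (Real.sqrt_pos.2 Real.pi_pos).ne'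
  have hdup := Real.Gamma_mul_Gamma_add_half (1 / 2 + α / 2)
  rw [show 1 / 2 + α / 2 + 1 / 2 = 1 + α / 2 by ring, show 2 * (1 / 2 + α / 2) = 1 + α by ring,
    show 1 - (1 + α) = -α by ring, Real.rpow_neg zero_le_two] at hdup
  have h2 : (2 : ℝ) ^ α ≠ 0 := (Real.rpow_pos_of_pos two_pos α).ne'
  rw [cFrac, Real.rpow_sub_one two_ne_zero]
  generalize Real.Gamma (1 - α / 2) = g at hΓ ⊢
  field_simp at hdup ⊢
  linear_combination hdup

section Polar

open Complex

lemma log_one_add_I_mul (x : ℝ) :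
    log (1 + I * x) = ((1 / 2 * Real.log (1 + x ^ 2) : ℝ) : ℂ) + (Real.arctan x : ℝ) * I := by
  have hnorm : ‖1 + I * (x : ℂ)‖ = √(1 + x ^ 2) := by
    rw [norm_def, normSq_apply]
    simp [pow_two]
  apply Complex.ext
  · rw [log_re, hnorm, Real.log_sqrt (by positivity)]
    simp [-ofReal_arctan, div_eq_inv_mul]
  · rw [log_im, arg_of_re_nonneg (by simp), hnorm, Real.arctan_eq_arcsin]
    simp

lemma I_pow_mul_one_add_I_mul_cpow (n : ℕ) (α x : ℝ) :
    I ^ (n + 1) * (1 + I * x) ^ (-((n : ℂ) + 1 + α)) =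
      (((1 + x ^ 2) ^ (((n : ℝ) + 1 + α) / 2))⁻¹ : ℝ) *
        exp ((((n : ℝ) + 1 + α) * arccot x - Real.pi * α / 2 : ℝ) * I) := by
  have hpos : 0 < 1 + x ^ 2 := by positivity
  have hI : I ^ (n + 1) = exp (((n + 1 : ℕ) : ℂ) * (Real.pi / 2 * I)) := by
    rw [exp_nat_mul, exp_pi_div_two_mul_I]
  rw [← Real.rpow_neg hpos.le, Real.rpow_def_of_pos hpos, ofReal_exp,
    cpow_def_of_ne_zero (add_I_mul_ne_zero (by simp) x), log_one_add_I_mul, hI, ← exp_add,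
    ← exp_add, arccot]
  congr 1
  push_cast
  ring

lemma sum_choose_mul_I_mul_pow (n : ℕ) (x : ℝ) (f : ℕ → ℝ) :
    ∑ j ∈ range (n + 1), n.choose j * (I * x) ^ (n - j) * f j =
      I ^ n *
        ((∑ l ∈ (range (n + 1)).filter (fun l => 2 * l ≤ n),
            (-1) ^ l * n.choose (2 * l) * x ^ (n - 2 * l) * f (2 * l) : ℝ) -
          I * (∑ l ∈ (range (n + 1)).filter (fun l => 2 * l + 1 ≤ n),
            (-1) ^ l * n.choose (2 * l + 1) * x ^ (n - 1 - 2 * l) * f (2 * l + 1) : ℝ)) := by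
  have hI : ∀ l : ℕ, (-1 : ℂ) ^ l * I ^ (2 * l) = 1 := by
    intro l
    rw [pow_mul, I_sq, ← mul_pow]
    simp
  rw [sum_range_even_add_odd, mul_sub, sub_eq_add_neg]
  push_cast
  simp only [mul_sum, ← sum_neg_distrib]
  congr 1 <;> refine sum_congr rfl fun l hl => ?_
  · obtain ⟨m, rfl⟩ : ∃ m, n = 2 * l + m := Nat.exists_eq_add_of_le (by grind)
    rw [Nat.add_sub_cancel_left, pow_add, mul_pow]
    linear_combination (-((2 * l + m).choose (2 * l) * I ^ m * x ^ m * f (2 * l)) : ℂ) * hI l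
  · obtain ⟨m, rfl⟩ : ∃ m, n = 2 * l + 1 + m := Nat.exists_eq_add_of_le (by grind)
    rw [Nat.add_sub_cancel_left, show 2 * l + 1 + m - 1 - 2 * l = m by omega, pow_add, pow_succ,
      mul_pow]
    linear_combination ((2 * l + 1 + m).choose (2 * l + 1) * I ^ m * x ^ m * f (2 * l + 1) : ℂ) *
      ((-1) ^ l * I ^ (2 * l) * I_sq - hI l)

lemma im_one_add_I_mul_cpow_mul (n : ℕ) (α x u v : ℝ) :
    ((1 + I * x) ^ (-((n : ℂ) + 1 + α)) * (I ^ n * (u - I * v))).im =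
      -(((1 + x ^ 2) ^ (((n : ℝ) + 1 + α) / 2))⁻¹ *
        (Real.cos (((n : ℝ) + 1 + α) * arccot x - Real.pi * α / 2) * u +
          Real.sin (((n : ℝ) + 1 + α) * arccot x - Real.pi * α / 2) * v)) := by
  have h := I_pow_mul_one_add_I_mul_cpow n α x
  set w := (1 + I * (x : ℂ)) ^ (-((n : ℂ) + 1 + α))
  have hw : w * (I ^ n * (u - I * v)) = -(I * (I ^ (n + 1) * w * (u - I * v))) := by
    linear_combination (w * I ^ n * (u - I * v)) * I_sq
  rw [hw, h, neg_im, I_mul_im, mul_assoc, re_ofReal_mul, mul_re, exp_ofReal_mul_I_re,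
    exp_ofReal_mul_I_im]
  simp

end Polar

section ImaginaryPart

open Complex

lemma integrableOn_im_mul_rpow_of_hasMellin {f : ℝ → ℂ} {s : ℝ} {m : ℂ} (h : HasMellin f s m) :
    IntegrableOn (fun y => (f y).im * y ^ (s - 1)) (Set.Ioi 0) ∧
      ∫ y in Set.Ioi (0 : ℝ), (f y).im * y ^ (s - 1) = m.im := by
  have him : Set.EqOn (fun y : ℝ => ((y : ℂ) ^ ((s : ℂ) - 1) • f y).im)
      (fun y => (f y).im * y ^ (s - 1)) (Set.Ioi 0) := by
    intro y (hy : 0 < y)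
    have hexp : (y : ℂ) ^ ((s : ℂ) - 1) = ((y ^ (s - 1) : ℝ) : ℂ) := by
      rw [ofReal_cpow hy.le]
      push_cast
      rfl
    simp only [hexp, smul_eq_mul, im_ofReal_mul]
    ring
  have hint := h.1
  refine ⟨IntegrableOn.congr_fun hint.im him measurableSet_Ioi, ?_⟩
  rw [← setIntegral_congr_fun measurableSet_Ioi him, ← h.2]
  exact integral_im hint

lemma SH'_eq_im_higgins' (n : ℕ) (x : ℝ) : SH' n x = (higgins' ((n : ℤ) + 1) x).im := by
  have h := (hasDerivAt_higgins_natCast_succ n x).differentiableAt.hasDerivAt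
  exact (imCLM.hasFDerivAt.comp_hasDerivAt x h).deriv

end ImaginaryPart

theorem fracLap_SH_general {α : ℝ} (hα : α ∈ Set.Ioo (-1 : ℝ) 2) (hα0 : α ≠ 0) (n : ℕ) (x : ℝ) :
    IntegrableOn (fun y : ℝ => (SH' n (x - y) - SH' n (x + y)) * y ^ (-α)) (Set.Ioi 0) ∧
    (cFrac α / α) * ∫ y in Set.Ioi (0 : ℝ), (SH' n (x - y) - SH' n (x + y)) * y ^ (-α) =
      (2 * ((n : ℝ) + 1) * Real.Gamma (1 + α) / (1 + x ^ 2) ^ (((n : ℝ) + 1 + α) / 2)) *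
          Real.cos (((n : ℝ) + 1 + α) * arccot x - Real.pi * α / 2) *
          ∑ l ∈ (Finset.range (n + 1)).filter (fun l => 2 * l ≤ n),
            (-1 : ℝ) ^ l * gbinomR (n : ℝ) (2 * l) * x ^ (n - 2 * l) * GR α (2 * l)
        + (2 * ((n : ℝ) + 1) * Real.Gamma (1 + α) / (1 + x ^ 2) ^ (((n : ℝ) + 1 + α) / 2)) *
          Real.sin (((n : ℝ) + 1 + α) * arccot x - Real.pi * α / 2) *
          ∑ l ∈ (Finset.range (n + 1)).filter (fun l => 2 * l + 1 ≤ n),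
            (-1 : ℝ) ^ l * gbinomR (n : ℝ) (2 * l + 1) * x ^ (n - 1 - 2 * l) *
              GR α (2 * l + 1) := by
  obtain ⟨hint, hval⟩ := integrableOn_im_mul_rpow_of_hasMellin
    (hasMellin_higgins'_sub_sub_higgins'_add hα n x)
  simp only [Complex.sub_im, ← SH'_eq_im_higgins', sub_sub_cancel_left] at hint hval
  refine ⟨hint, ?_⟩
  simp only [← ofReal_GR] at hval
  have hconst : cFrac α / α * (-4 * (n + 1) * (Real.Gamma (1 - α / 2) * Real.Gamma (1 + α / 2))) =
      -2 * (n + 1) * Real.Gamma (1 + α) := by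
    linear_combination (-4 * (n + 1 : ℝ)) * cFrac_div_mul_Gamma_mul_Gamma hα0 hα.2
  rw [hval, sum_choose_mul_I_mul_pow, Complex.im_ofReal_mul, im_one_add_I_mul_cpow_mul, ← mul_assoc,
    hconst]
  simp only [gbinomR_natCast]
  ring

theorem fracLap_SH (α : ℝ) (hα : α ∈ Set.Ioo (0 : ℝ) 2) (n : ℕ) (x : ℝ) :
    IntegrableOn (fun y : ℝ => (SH' n (x - y) - SH' n (x + y)) * y ^ (-α)) (Set.Ioi 0) ∧
    (cFrac α / α) * ∫ y in Set.Ioi (0 : ℝ), (SH' n (x - y) - SH' n (x + y)) * y ^ (-α) =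
      (2 * ((n : ℝ) + 1) * Real.Gamma (1 + α) / (1 + x ^ 2) ^ (((n : ℝ) + 1 + α) / 2)) *
          Real.cos (((n : ℝ) + 1 + α) * arccot x - Real.pi * α / 2) *
          ∑ l ∈ (Finset.range (n + 1)).filter (fun l => 2 * l ≤ n),
            (-1 : ℝ) ^ l * gbinomR (n : ℝ) (2 * l) * x ^ (n - 2 * l) * GR α (2 * l)
        + (2 * ((n : ℝ) + 1) * Real.Gamma (1 + α) / (1 + x ^ 2) ^ (((n : ℝ) + 1 + α) / 2)) *
          Real.sin (((n : ℝ) + 1 + α) * arccot x - Real.pi * α / 2) *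
          ∑ l ∈ (Finset.range (n + 1)).filter (fun l => 2 * l + 1 ≤ n),
            (-1 : ℝ) ^ l * gbinomR (n : ℝ) (2 * l + 1) * x ^ (n - 1 - 2 * l) *
              GR α (2 * l + 1) :=
  fracLap_SH_general ⟨neg_one_lt_zero.trans hα.1, hα.2⟩ hα.1.ne' n x
end

section
/- Let α ∈ (0,2), n ∈ ℕ with n ≥ 1, and x ∈ ℝ. Define h : ℂ → ℂ by h(z) = z^(−α)·(z + x + i)^(n−1), using the principal branch for z^(−α). Then the n-th complex derivative of h at the point z = i − x satisfies (1/n!)·h^(n)(i−x) = ∑_{k=1}^{n} C(n−1,k−1)·C(−α,k)·(i−x)^(−α−k)·(2i)^(k−1). (This is the residue of the integrand g_n at its pole z = i−x in the contour-integral computation of the fractional Laplacian of λ_n.) -/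
open MeasureTheory Finset

/-!
In terms of Taylor coefficients `f⁽ⁿ⁾(a) / n!`, the Leibniz rule is a Cauchy product. The `k`-th
coefficient of `z ^ c` at `a` is `C(c, k) * a ^ (c - k)` by Newton's binomial series, and the `j`-th
one of `(z + w) ^ (n - 1)` is `C(n - 1, j) * (a + w) ^ (n - 1 - j)`. In the Cauchy product of order
`n` the term `k = 0` drops out because `(z + w) ^ (n - 1)` has degree less than `n`; for `k ≥ 1` the
symmetry `C(n - 1, n - k) = C(n - 1, k - 1)` gives the stated form.
-/

section TaylorCoeff

variable {𝕜 F 𝔸 : Type*} [NontriviallyNormedField 𝕜] [NormedAddCommGroup F] [NormedSpace 𝕜 F]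
  [NormedRing 𝔸] [NormedAlgebra 𝕜 𝔸]

/-- The Taylor coefficient `f⁽ⁿ⁾(a) / n!` of `f` at `a`, meaningful in characteristic zero. For
complex analytic `f` it is the residue of `z ↦ f z / (z - a) ^ (n + 1)` at `a`. -/
noncomputable def taylorCoeff (n : ℕ) (f : 𝕜 → F) (a : 𝕜) : F :=
  (n.factorial : 𝕜)⁻¹ • iteratedDeriv n f a

theorem taylorCoeff_comp_add_const (n : ℕ) (f : 𝕜 → F) (w a : 𝕜) :
    taylorCoeff n (fun z ↦ f (z + w)) a = taylorCoeff n f (a + w) := by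
  simp only [taylorCoeff, iteratedDeriv_comp_add_const]

variable [CharZero 𝕜]

theorem taylorCoeff_mul {n : ℕ} {f g : 𝕜 → 𝔸} {a : 𝕜} (hf : ContDiffAt 𝕜 n f a)
    (hg : ContDiffAt 𝕜 n g a) :
    taylorCoeff n (f * g) a =
      ∑ p ∈ antidiagonal n, taylorCoeff p.1 f a * taylorCoeff p.2 g a := by
  simp only [taylorCoeff]
  rw [iteratedDeriv_mul hf hg, smul_sum, Nat.sum_antidiagonal_eq_sum_range_succ_mk]
  refine sum_congr rfl fun i hi ↦ ?_
  have hin : i ≤ n := Nat.lt_succ_iff.mp (mem_range.mp hi)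
  have hn : (n.factorial : 𝕜) ≠ 0 := mod_cast n.factorial_ne_zero
  have hchoose : (n.factorial : 𝕜)⁻¹ * n.choose i =
      (i.factorial : 𝕜)⁻¹ * ((n - i).factorial : 𝕜)⁻¹ := by
    rw [Nat.cast_choose 𝕜 hin]
    field_simp
  rw [smul_mul_smul_comm, ← hchoose, mul_smul, Nat.cast_smul_eq_nsmul, nsmul_eq_mul, mul_assoc]

theorem taylorCoeff_pow (k m : ℕ) (a : 𝕜) :
    taylorCoeff k (fun z ↦ z ^ m) a = m.choose k * a ^ (m - k) := by
  have hk : (k.factorial : 𝕜) ≠ 0 := mod_cast k.factorial_ne_zero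
  rw [taylorCoeff, iteratedDeriv_pow, Nat.descFactorial_eq_factorial_mul_choose, Nat.cast_mul,
    mul_assoc, smul_eq_mul, inv_mul_cancel_left₀ hk]

end TaylorCoeff

theorem iteratedDeriv_cpow_const (k : ℕ) (c : ℂ) {a : ℂ} (ha : a ∈ Complex.slitPlane) :
    iteratedDeriv k (fun z : ℂ ↦ z ^ c) a = (descPochhammer ℂ k).eval c * a ^ (c - k) := by
  induction k generalizing a with
  | zero => simp
  | succ k ih =>
    have heq : iteratedDeriv k (fun z : ℂ ↦ z ^ c) =ᶠ[nhds a]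
        fun z ↦ (descPochhammer ℂ k).eval c * z ^ (c - k) :=
      Filter.eventually_of_mem (Complex.isOpen_slitPlane.mem_nhds ha) fun _ ↦ ih
    rw [iteratedDeriv_succ, heq.deriv_eq, deriv_const_mul_field, Complex.deriv_cpow_const ha,
      descPochhammer_succ_eval, Nat.cast_succ, sub_sub, mul_assoc]

theorem gbinom_eq_descPochhammer_eval_div (z : ℂ) (k : ℕ) :
    gbinom z k = (descPochhammer ℂ k).eval z / k.factorial := by
  rw [gbinom, descPochhammer_eval_eq_prod_range]

theorem gbinom_natCast_s9 (m k : ℕ) : gbinom m k = m.choose k := by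
  have hk : (k.factorial : ℂ) ≠ 0 := mod_cast k.factorial_ne_zero
  rw [gbinom_eq_descPochhammer_eval_div, descPochhammer_eval_eq_descFactorial,
    Nat.descFactorial_eq_factorial_mul_choose, Nat.cast_mul, mul_div_cancel_left₀ _ hk]

theorem taylorCoeff_cpow_const (k : ℕ) (c : ℂ) {a : ℂ} (ha : a ∈ Complex.slitPlane) :
    taylorCoeff k (fun z : ℂ ↦ z ^ c) a = gbinom c k * a ^ (c - k) := by
  rw [taylorCoeff, iteratedDeriv_cpow_const k c ha, gbinom_eq_descPochhammer_eval_div,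
    smul_eq_mul, ← mul_assoc, inv_mul_eq_div]

theorem taylorCoeff_cpow_mul_add_pow (n m : ℕ) (c w : ℂ) {a : ℂ} (ha : a ∈ Complex.slitPlane) :
    taylorCoeff n (fun z : ℂ ↦ z ^ c * (z + w) ^ m) a =
      ∑ p ∈ antidiagonal n,
        gbinom c p.1 * a ^ (c - p.1) * (m.choose p.2 * (a + w) ^ (m - p.2)) := by
  have hcpow : ContDiffAt ℂ n (fun z : ℂ ↦ z ^ c) a :=
    (analyticAt_id.cpow analyticAt_const ha).contDiffAt
  have hpow : ContDiffAt ℂ n (fun z : ℂ ↦ (z + w) ^ m) a := by fun_prop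
  refine (taylorCoeff_mul hcpow hpow).trans (sum_congr rfl fun p _ ↦ ?_)
  rw [taylorCoeff_cpow_const p.1 c ha, taylorCoeff_comp_add_const p.2 (fun z ↦ z ^ m),
    taylorCoeff_pow]

theorem residue_at_i_sub_x_general (c w : ℂ) {a : ℂ} (ha : a ∈ Complex.slitPlane) {n : ℕ}
    (hn : 1 ≤ n) :
    (1 / (n.factorial : ℂ)) * iteratedDeriv n (fun z : ℂ ↦ z ^ c * (z + w) ^ (n - 1)) a =
      ∑ k ∈ Icc 1 n,
        gbinom ((n : ℂ) - 1) (k - 1) * gbinom c k * a ^ (c - k) * (a + w) ^ (k - 1) := by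
  obtain ⟨m, rfl⟩ := Nat.exists_eq_add_of_le' hn
  have hcast : ((m + 1 : ℕ) : ℂ) - 1 = m := by rw [Nat.cast_succ, add_sub_cancel_right]
  rw [one_div, ← smul_eq_mul, ← taylorCoeff, Nat.add_sub_cancel, hcast]
  calc taylorCoeff (m + 1) (fun z : ℂ ↦ z ^ c * (z + w) ^ m) a
    _ = ∑ p ∈ antidiagonal m, gbinom c (p.1 + 1) * a ^ (c - (p.1 + 1 : ℕ)) *
          (m.choose p.2 * (a + w) ^ (m - p.2)) := by
      rw [taylorCoeff_cpow_mul_add_pow _ _ c w ha, Nat.sum_antidiagonal_succ,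
        Nat.choose_succ_self, Nat.cast_zero, zero_mul, mul_zero, zero_add]
    _ = ∑ p ∈ antidiagonal m, gbinom m p.1 * gbinom c (p.1 + 1) * a ^ (c - (p.1 + 1 : ℕ)) *
          (a + w) ^ p.1 := by
      refine sum_congr rfl fun p hp ↦ ?_
      have hsum : m = p.1 + p.2 := (mem_antidiagonal.mp hp).symm
      rw [gbinom_natCast_s9, Nat.choose_symm_of_eq_add hsum, Nat.sub_eq_of_eq_add hsum]
      ring
    _ = ∑ k ∈ Icc 1 (m + 1), gbinom m (k - 1) * gbinom c k * a ^ (c - k) * (a + w) ^ (k - 1) := by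
      rw [Nat.sum_antidiagonal_eq_sum_range_succ_mk, ← Ico_add_one_right_eq_Icc,
        sum_Ico_eq_sum_range]
      simp only [Nat.add_sub_cancel, Nat.add_comm 1]

theorem residue_at_i_sub_x (α : ℝ) (hα : α ∈ Set.Ioo (0 : ℝ) 2) (n : ℕ) (hn : 1 ≤ n) (x : ℝ) :
    (1 / (n.factorial : ℂ)) *
        iteratedDeriv n
          (fun z : ℂ => z ^ (-(α : ℂ)) * (z + (x : ℂ) + Complex.I) ^ (n - 1))
          (Complex.I - (x : ℂ)) =
      ∑ k ∈ Finset.Icc 1 n,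
        gbinom ((n : ℂ) - 1) (k - 1) * gbinom (-(α : ℂ)) k *
          (Complex.I - (x : ℂ)) ^ (-(α : ℂ) - (k : ℂ)) * (2 * Complex.I) ^ (k - 1) := by
  have hmem : Complex.I - (x : ℂ) ∈ Complex.slitPlane := Or.inr (by simp)
  simpa only [← add_assoc, sub_add_cancel, ← two_mul] using
    residue_at_i_sub_x_general (-(α : ℂ)) (x + Complex.I) hmem hn
end
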